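/- arXiv:2009.07311 — 4 statements merged into one kernel-verified Lean document; each statement's English description precedes it below -/
import Mathlib

section
/- Let F be a finite field and let A ⊆ F × F be a subset of density μ = |A|/|F|². Then for every real ε > 0, the number of pairs (x, y) ∈ (F × F) × (F × F) such that | |{t ∈ F : x + t·y ∈ A}| − μ·|F| | > ε·|F| is at most (μ/(|F|·ε²))·|F|⁴. (Equivalently: for uniformly random x, y ∈ F², the probability that the fraction of points of the line {x + t·y : t ∈ F} lying in A deviates from μ by more than ε is at most μ/(|F|·ε²).) -/
open scoped Classical

/-!
On a finite module, whenever multiplication by `s - t` is injective, the pair of points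
`(x + s • y, x + t • y)` runs exactly once over all pairs of points as `(x, y)` does. The points of
a random line are thus uniformly distributed and pairwise independent, so the variance of the
number of them lying in `A` is the sum of the variances of the individual indicators, and
Chebyshev's inequality applies.
-/

open Finset

theorem card_filter_lt_abs_mul_sq_le_sum_sq {ι k : Type*} [Ring k] [LinearOrder k]
    [IsStrictOrderedRing k] (s : Finset ι) (f : ι → k) {c : k} (hc : 0 ≤ c) :
    (#{i ∈ s | c < |f i|} : k) * c ^ 2 ≤ ∑ i ∈ s, f i ^ 2 :=
  calc (#{i ∈ s | c < |f i|} : k) * c ^ 2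
      = ∑ i ∈ s with c < |f i|, c ^ 2 := by rw [sum_const, nsmul_eq_mul]
    _ ≤ ∑ i ∈ s with c < |f i|, f i ^ 2 := by
        refine sum_le_sum fun i hi => ?_
        rw [← sq_abs (f i)]
        exact pow_le_pow_left₀ hc (mem_filter.mp hi).2.le 2
    _ ≤ ∑ i ∈ s, f i ^ 2 :=
        sum_le_sum_of_subset_of_nonneg (filter_subset _ _) fun _ _ _ => sq_nonneg _

section CenteredIndicator

variable {V k : Type*} [Fintype V] [DecidableEq V] [CommRing k] {A : Finset V} {μ : k}

theorem sum_indicator_sub_density_eq_zero (hμ : μ * Fintype.card V = #A) :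
    ∑ v, ((if v ∈ A then 1 else 0) - μ) = 0 := by
  simp [← hμ, mul_comm]

theorem sum_indicator_sub_density_sq (hμ : μ * Fintype.card V = #A) :
    ∑ v, ((if v ∈ A then 1 else 0) - μ) ^ 2 = Fintype.card V * (μ * (1 - μ)) :=
  calc ∑ v, ((if v ∈ A then 1 else 0) - μ) ^ 2
      = ∑ v, ((1 - 2 * μ) * (if v ∈ A then 1 else 0) + μ ^ 2) :=
        sum_congr rfl fun v _ => by split_ifs <;> ring
    _ = (1 - 2 * μ) * #A + Fintype.card V * μ ^ 2 := by
        rw [sum_add_distrib, ← mul_sum, sum_boole, filter_univ_mem, sum_const, card_univ,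
          nsmul_eq_mul]
    _ = Fintype.card V * (μ * (1 - μ)) := by rw [← hμ]; ring

end CenteredIndicator

section Lines

variable {R V : Type*} [Ring R] [AddCommGroup V] [Module R V]

theorem injective_add_smul_pair {s t : R} (hst : IsSMulRegular V (s - t)) :
    Function.Injective fun p : V × V => (p.1 + s • p.2, p.1 + t • p.2) := by
  rintro ⟨x, y⟩ ⟨x', y'⟩ h
  obtain ⟨hs, ht⟩ : x + s • y = x' + s • y' ∧ x + t • y = x' + t • y' := Prod.mk.inj h
  have hy : y = y' := hst <| by
    simpa only [sub_smul, add_sub_add_left_eq_sub] using congrArg₂ (· - ·) hs ht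
  subst hy
  exact Prod.ext (add_right_cancel hs) rfl

variable [Fintype V]

theorem sum_add_smul_mul_add_smul {k : Type*} [NonUnitalNonAssocSemiring k] {s t : R}
    (hst : IsSMulRegular V (s - t)) (f g : V → k) :
    ∑ p : V × V, f (p.1 + s • p.2) * g (p.1 + t • p.2) = (∑ v, f v) * ∑ v, g v := by
  have hbij := Finite.injective_iff_bijective.mp (injective_add_smul_pair hst)
  rw [sum_mul_sum, ← Fintype.sum_prod_type']
  exact hbij.sum_comp fun q : V × V => f q.1 * g q.2

theorem sum_add_smul {M : Type*} [AddCommMonoid M] (t : R) (f : V → M) :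
    ∑ p : V × V, f (p.1 + t • p.2) = Fintype.card V • ∑ v, f v := by
  have htranslate (y : V) : ∑ x, f (x + t • y) = ∑ v, f v :=
    Equiv.sum_comp (Equiv.addRight (t • y)) f
  simp only [Fintype.sum_prod_type_right, htranslate, sum_const, card_univ]

variable {T : Finset R}

theorem sum_sq_sum_add_smul {k : Type*} [Semiring k]
    (hT : (T : Set R).Pairwise fun s t => IsSMulRegular V (s - t)) {g : V → k}
    (hg : ∑ v, g v = 0) :
    ∑ p : V × V, (∑ t ∈ T, g (p.1 + t • p.2)) ^ 2 = #T * (Fintype.card V * ∑ v, g v ^ 2) :=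
  calc ∑ p : V × V, (∑ t ∈ T, g (p.1 + t • p.2)) ^ 2
      = ∑ s ∈ T, ∑ t ∈ T, ∑ p : V × V, g (p.1 + s • p.2) * g (p.1 + t • p.2) := by
        simp only [sq, sum_mul_sum]
        rw [sum_comm]
        exact sum_congr rfl fun _ _ => sum_comm
    _ = ∑ s ∈ T, ∑ p : V × V, g (p.1 + s • p.2) * g (p.1 + s • p.2) := by
        refine sum_congr rfl fun s hs => sum_eq_single_of_mem s hs fun t ht hts => ?_
        rw [sum_add_smul_mul_add_smul (hT hs ht hts.symm), hg, zero_mul]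
    _ = #T * (Fintype.card V * ∑ v, g v ^ 2) := by
        simp only [← sq, sum_add_smul _ fun v => g v ^ 2, sum_const, nsmul_eq_mul]

theorem sum_sq_card_filter_add_smul_mem_sub [DecidableEq V] {k : Type*} [CommRing k]
    (hT : (T : Set R).Pairwise fun s t => IsSMulRegular V (s - t)) {A : Finset V} {μ : k}
    (hμ : μ * Fintype.card V = #A) :
    ∑ p : V × V, ((#{t ∈ T | p.1 + t • p.2 ∈ A} : k) - μ * #T) ^ 2
      = #T * (μ * (1 - μ)) * Fintype.card V ^ 2 := by
  have hdev (p : V × V) : (#{t ∈ T | p.1 + t • p.2 ∈ A} : k) - μ * #T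
      = ∑ t ∈ T, ((if p.1 + t • p.2 ∈ A then 1 else 0) - μ) := by
    rw [sum_sub_distrib, sum_boole, sum_const, nsmul_eq_mul, mul_comm]
  simp only [hdev]
  rw [sum_sq_sum_add_smul hT (sum_indicator_sub_density_eq_zero hμ),
    sum_indicator_sub_density_sq hμ]
  ring

theorem line_sampling_general [DecidableEq V] (hT₀ : T.Nonempty)
    (hT : (T : Set R).Pairwise fun s t => IsSMulRegular V (s - t)) (A : Finset V) {μ : ℝ}
    (hμ : μ = (#A : ℝ) / Fintype.card V) {ε : ℝ} (hε : 0 < ε) :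
    (#{p : V × V | |(#{t ∈ T | p.1 + t • p.2 ∈ A} : ℝ) - μ * #T| > ε * #T} : ℝ)
      ≤ μ / (#T * ε ^ 2) * (Fintype.card V : ℝ) ^ 2 := by
  have hT_pos : (0 : ℝ) < #T := by exact_mod_cast hT₀.card_pos
  rw [eq_div_iff (Nat.cast_ne_zero.mpr Fintype.card_ne_zero)] at hμ
  have hvar_le : μ * (1 - μ) ≤ μ := by nlinarith [sq_nonneg μ]
  have hbound : μ / (#T * ε ^ 2) * (Fintype.card V : ℝ) ^ 2
      = #T * μ * (Fintype.card V : ℝ) ^ 2 / (ε * #T) ^ 2 := by field_simp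
  rw [hbound, le_div_iff₀ (by positivity)]
  calc _ ≤ ∑ p : V × V, ((#{t ∈ T | p.1 + t • p.2 ∈ A} : ℝ) - μ * #T) ^ 2 :=
        card_filter_lt_abs_mul_sq_le_sum_sq univ _ (by positivity)
    _ = #T * (μ * (1 - μ)) * (Fintype.card V : ℝ) ^ 2 := sum_sq_card_filter_add_smul_mem_sub hT hμ
    _ ≤ #T * μ * (Fintype.card V : ℝ) ^ 2 := by gcongr

end Lines

/-- **Sampling lemma for lines in the affine plane.**
For a finite field `F` and a subset `A ⊆ F × F` of density `μ`, for every `ε > 0`,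
the number of pairs `(x, y)` of points of `F²` such that the number of parameters
`t ∈ F` with `x + t • y ∈ A` deviates from `μ·|F|` by more than `ε·|F|`
is at most `(μ / (|F|·ε²)) · |F|⁴`. -/
theorem line_sampling (F : Type*) [Field F] [Fintype F]
    (A : Finset (F × F)) (μ : ℝ) (hμ : μ = (A.card : ℝ) / (Fintype.card F : ℝ) ^ 2)
    (ε : ℝ) (hε : 0 < ε) :
    ((Finset.univ.filter (fun xy : (F × F) × (F × F) =>
        |((Finset.univ.filter (fun t : F => xy.1 + t • xy.2 ∈ A)).card : ℝ)
            - μ * (Fintype.card F : ℝ)| > ε * (Fintype.card F : ℝ))).card : ℝ)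
      ≤ (μ / ((Fintype.card F : ℝ) * ε ^ 2)) * (Fintype.card F : ℝ) ^ 4 := by
  have hcard : (Fintype.card (F × F) : ℝ) = (Fintype.card F : ℝ) ^ 2 := by
    rw [Fintype.card_prod, Nat.cast_mul, sq]
  exact (line_sampling_general univ_nonempty
    (fun _ _ _ _ hst => .of_ne_zero (sub_ne_zero.mpr hst)) A (hμ.trans (by rw [hcard])) hε).trans_eq
    (by rw [hcard, ← pow_mul, card_univ])
end

section
/- Let K be a finite field with q = |K|, let m ≥ 1, and let A be any set of m × m matrices over K with |A| = α·q^{m²}. Then the number of pairs (H, T) of m × m matrices over K such that the product H·T lies in A is at most (α + 2/q)·q^{2m²}. (Equivalently: for uniformly random and independent matrices H and T, Pr[H·T ∈ A] ≤ α + 2/q.) -/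
open scoped Classical

/-!
If `H` is invertible then `T ↦ H * T` is a bijection, so exactly `|A|` matrices `T` satisfy
`H * T ∈ A`. Singular `H` contribute at most `q ^ m²` matrices `T` each, and a union bound on the
product formula for the order of `GL m K` shows that they make up a proportion of at most
`∑ i < m, q ^ i / q ^ m ≤ 1 / (q - 1) ≤ 2 / q` of all matrices.
-/

section MonoidAction

variable {M X : Type*} [Monoid M]

theorem ncard_setOf_isUnit : {a : M | IsUnit a}.ncard = Nat.card Mˣ :=
  Set.ncard_range_of_injective Units.val_injective

theorem card_units_add_ncard_nonunits [Finite M] :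
    Nat.card Mˣ + (nonunits M).ncard = Nat.card M := by
  rw [← ncard_setOf_isUnit]
  exact Set.ncard_add_ncard_compl _

variable [MulAction M X] [Fintype X] [DecidableEq X]

theorem card_filter_smul_mem_of_isUnit {a : M} (ha : IsUnit a) (A : Finset X) :
    (Finset.univ.filter (fun x : X => a • x ∈ A)).card = A.card := by
  obtain ⟨u, rfl⟩ := ha
  exact Finset.card_equiv (MulAction.toPerm u) (by simp [Units.smul_def])

theorem card_filter_fst_smul_snd_mem_le [Fintype M] (A : Finset X) :
    (Finset.univ.filter (fun p : M × X => p.1 • p.2 ∈ A)).card ≤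
      Nat.card Mˣ * A.card + (nonunits M).ncard * Fintype.card X := by
  have sum_over_fibers : (Finset.univ.filter (fun p : M × X => p.1 • p.2 ∈ A)).card =
      ∑ a : M, (Finset.univ.filter (fun x : X => a • x ∈ A)).card := by
    simp only [Finset.card_filter, Fintype.sum_prod_type]
  have card_isUnit : (Finset.univ.filter (fun a : M => IsUnit a)).card = Nat.card Mˣ := by
    rw [← ncard_setOf_isUnit, Set.ncard_eq_toFinset_card', Set.toFinset_ofPred]
  have card_not_isUnit :
      (Finset.univ.filter (fun a : M => ¬ IsUnit a)).card = (nonunits M).ncard := by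
    rw [nonunits, Set.ncard_eq_toFinset_card', Set.toFinset_ofPred]
  rw [sum_over_fibers, ← Finset.sum_filter_add_sum_filter_not Finset.univ (fun a : M => IsUnit a),
    ← card_isUnit, ← card_not_isUnit]
  refine add_le_add (Finset.sum_le_card_nsmul _ _ _ fun a ha => ?_)
    (Finset.sum_le_card_nsmul _ _ _ fun a _ => Finset.card_le_univ _)
  exact (card_filter_smul_mem_of_isUnit (Finset.mem_filter.1 ha).2 A).le

end MonoidAction

theorem one_sub_sum_le_prod_one_sub {ι R : Type*} [CommRing R] [LinearOrder R]
    [IsStrictOrderedRing R] (s : Finset ι) (f : ι → R) (nonneg : ∀ i ∈ s, 0 ≤ f i)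
    (le_one : ∀ i ∈ s, f i ≤ 1) :
    1 - ∑ i ∈ s, f i ≤ ∏ i ∈ s, (1 - f i) := by
  induction s using Finset.cons_induction with
  | empty => simp
  | cons a s ha ih =>
    simp only [Finset.forall_mem_cons] at nonneg le_one
    have prod_le_one : ∏ i ∈ s, (1 - f i) ≤ 1 :=
      Finset.prod_le_one (fun i hi => sub_nonneg.2 (le_one.2 i hi))
        fun i hi => sub_le_self 1 (nonneg.2 i hi)
    have mul_prod_le : f a * ∏ i ∈ s, (1 - f i) ≤ f a := mul_le_of_le_one_right nonneg.1 prod_le_one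
    rw [Finset.sum_cons, Finset.prod_cons]
    linarith [ih nonneg.2 le_one.2]

theorem sum_range_pow_div_pow_le {F : Type*} [Field F] [LinearOrder F] [IsStrictOrderedRing F]
    {q : F} (hq : 1 < q) (m : ℕ) :
    ∑ i ∈ Finset.range m, q ^ i / q ^ m ≤ 1 / (q - 1) := by
  have hpow : 0 < q ^ m := pow_pos (zero_lt_one.trans hq) m
  rw [← Finset.sum_div, geom_sum_eq hq.ne', div_right_comm, sub_div, div_self hpow.ne']
  exact div_le_div_of_nonneg_right (sub_le_self 1 (by positivity)) (sub_pos.2 hq).le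

theorem card_square_matrix (R : Type*) [Fintype R] (m : ℕ) :
    Nat.card (Matrix (Fin m) (Fin m) R) = Fintype.card R ^ (m ^ 2) := by
  simp [Matrix, ← pow_mul, sq]

section FiniteField

variable (K : Type*) [Field K] [Fintype K] (m : ℕ)

local notation "q" => (Fintype.card K : ℝ)

theorem card_GL_eq_prod_mul_pow :
    (Nat.card (GL (Fin m) K) : ℝ) =
      (∏ i ∈ Finset.range m, (1 - q ^ i / q ^ m)) * q ^ (m ^ 2) := by
  have hq : 0 < q := mod_cast Fintype.card_pos
  have hpow : q ^ (m ^ 2) = ∏ _i ∈ Finset.range m, q ^ m := by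
    rw [Finset.prod_const, Finset.card_range, ← pow_mul, sq]
  rw [Matrix.card_GL_field, Nat.cast_prod, hpow, ← Finset.prod_mul_distrib,
    ← Fin.prod_univ_eq_prod_range (fun i => (1 - q ^ i / q ^ m) * q ^ m)]
  refine Finset.prod_congr rfl fun i _ => ?_
  rw [Nat.cast_sub (Nat.pow_le_pow_right Fintype.card_pos i.is_le'), sub_mul, one_mul,
    div_mul_cancel₀ _ (pow_pos hq m).ne', Nat.cast_pow, Nat.cast_pow]

theorem one_sub_one_div_mul_pow_le_card_GL :
    (1 - 1 / (q - 1)) * q ^ (m ^ 2) ≤ (Nat.card (GL (Fin m) K) : ℝ) := by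
  have hq : 1 < q := mod_cast Fintype.one_lt_card
  rw [card_GL_eq_prod_mul_pow]
  gcongr
  calc 1 - 1 / (q - 1) ≤ 1 - ∑ i ∈ Finset.range m, q ^ i / q ^ m :=
        sub_le_sub_left (sum_range_pow_div_pow_le hq m) 1
    _ ≤ ∏ i ∈ Finset.range m, (1 - q ^ i / q ^ m) :=
        one_sub_sum_le_prod_one_sub _ _ (fun i _ => by positivity) fun i hi =>
          div_le_one_of_le₀ (pow_le_pow_right₀ hq.le (Finset.mem_range.1 hi).le) (by positivity)

theorem ncard_nonunits_matrix_le :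
    ((nonunits (Matrix (Fin m) (Fin m) K)).ncard : ℝ) ≤ 1 / (q - 1) * q ^ (m ^ 2) := by
  have partition : (Nat.card (GL (Fin m) K) : ℝ) +
      (nonunits (Matrix (Fin m) (Fin m) K)).ncard = q ^ (m ^ 2) :=
    mod_cast card_units_add_ncard_nonunits.trans (card_square_matrix K m)
  linarith [one_sub_one_div_mul_pow_le_card_GL K m]

end FiniteField

/-- **Product of two uniformly random matrices is almost uniform.**
Over a finite field `K` with `q = |K|`, for `m ≥ 1` and any set `A` of `m × m`
matrices with `|A| = α · q^(m²)`, the number of pairs `(H, T)` of `m × m`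
matrices whose product `H · T` lies in `A` is at most `(α + 2/q) · q^(2m²)`. -/
theorem matrix_product_almost_uniform (K : Type*) [Field K] [Fintype K] [DecidableEq K]
    (m : ℕ) (hm : 1 ≤ m) (A : Finset (Matrix (Fin m) (Fin m) K)) (α : ℝ)
    (hα : (A.card : ℝ) = α * (Fintype.card K : ℝ) ^ (m ^ 2)) :
    ((Finset.univ.filter (fun HT : Matrix (Fin m) (Fin m) K × Matrix (Fin m) (Fin m) K =>
        HT.1 * HT.2 ∈ A)).card : ℝ)
      ≤ (α + 2 / (Fintype.card K : ℝ)) * (Fintype.card K : ℝ) ^ (2 * m ^ 2) := by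
  have hq : (2 : ℝ) ≤ Fintype.card K := mod_cast Fintype.one_lt_card
  have hcard := card_square_matrix K m
  have hunits : (Nat.card (GL (Fin m) K) : ℝ) ≤ (Fintype.card K : ℝ) ^ (m ^ 2) :=
    mod_cast (Nat.le_add_right _ _).trans_eq (card_units_add_ncard_nonunits.trans hcard)
  have hsingular : ((nonunits (Matrix (Fin m) (Fin m) K)).ncard : ℝ) ≤
      2 / (Fintype.card K : ℝ) * (Fintype.card K : ℝ) ^ (m ^ 2) := by
    refine (ncard_nonunits_matrix_le K m).trans (mul_le_mul_of_nonneg_right ?_ (by positivity))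
    rw [div_le_div_iff₀] <;> linarith
  have hcount := card_filter_fst_smul_snd_mem_le (M := Matrix (Fin m) (Fin m) K) A
  rw [← Nat.card_eq_fintype_card, hcard] at hcount
  calc _ ≤ (Nat.card (GL (Fin m) K) : ℝ) * A.card +
        (nonunits (Matrix (Fin m) (Fin m) K)).ncard * (Fintype.card K : ℝ) ^ (m ^ 2) :=
        mod_cast hcount
    _ ≤ (Fintype.card K : ℝ) ^ (m ^ 2) * A.card +
        2 / (Fintype.card K : ℝ) * (Fintype.card K : ℝ) ^ (m ^ 2) *
          (Fintype.card K : ℝ) ^ (m ^ 2) := by gcongr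
    _ = (α + 2 / (Fintype.card K : ℝ)) * (Fintype.card K : ℝ) ^ (2 * m ^ 2) := by
        rw [hα]
        ring
end

section
/- Let m ≥ 1, let H be a finite field, and let F be a field extension of H of degree m. Let f : F^m → F be a function that is nonzero on at most τ·|F|^m inputs (i.e., f is τ-close to the all-zeros function). Fix any starting point x₀ ∈ F^m and any h₀ ∈ H^m. Consider the random process that samples, uniformly and independently, vectors h'₀, h'₁, …, h'_m ∈ H^m and field elements s₀, …, s_m ∈ F, s'₀, …, s'_m ∈ F, t₀, …, t_{m−1} ∈ F, t'₀, …, t'_{m−1} ∈ F, and defines recursively (in F^m, applying the inclusion ι : H^m → F^m componentwise): ĥ₀ = ι(h₀); for 1 ≤ i ≤ m, ĥ_i = t_{i−1} • ĥ_{i−1} + t'_{i−1} • ι(h'_{i−1}) and x_i = x_{i−1} + s_{i−1} • ĥ_{i−1} + s'_{i−1} • ι(h'_{i−1}); and finally z = x_m + s_m • ĥ_m + s'_m • ι(h'_m). Then the probability (i.e., the fraction of tuples in the finite sample space (H^m)^{m+1} × F^{4m+2}) that f(z) ≠ 0 is at most τ + 2/|H|. -/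
open scoped Classical

noncomputable section

/-- Componentwise application of the field inclusion `H ↪ F` to a vector. -/
def iotaV {H F : Type*} [CommSemiring H] [CommSemiring F] [Algebra H F] {m : ℕ}
    (v : Fin m → H) : Fin m → F :=
  fun j => algebraMap H F (v j)

/-- Extend a `Fin n`-indexed family to a `ℕ`-indexed family by zero. -/
def pad {β : Type*} [Zero β] {n : ℕ} (f : Fin n → β) : ℕ → β :=
  fun i => if h : i < n then f ⟨i, h⟩ else 0

/-- The direction vectors `ĥ_i` of the plane-line random walk:
`ĥ₀ = ι(h₀)` and `ĥ_{i+1} = t_i • ĥ_i + t'_i • ι(h'_i)`. -/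
def walkH {H F : Type*} [CommSemiring H] [Field F] [Algebra H F] {m : ℕ}
    (h0 : Fin m → H) (h' : ℕ → Fin m → H) (t t' : ℕ → F) : ℕ → (Fin m → F)
  | 0 => iotaV h0
  | (i + 1) => t i • walkH h0 h' t t' i + t' i • iotaV (h' i)

/-- The base points `x_i` of the plane-line random walk:
`x_{i+1} = x_i + s_i • ĥ_i + s'_i • ι(h'_i)`. -/
def walkX {H F : Type*} [CommSemiring H] [Field F] [Algebra H F] {m : ℕ}
    (x0 : Fin m → F) (h0 : Fin m → H) (h' : ℕ → Fin m → H) (s s' t t' : ℕ → F) :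
    ℕ → (Fin m → F)
  | 0 => x0
  | (i + 1) => walkX x0 h0 h' s s' t t' i + s i • walkH h0 h' t t' i + s' i • iotaV (h' i)

/-!
The coefficients `s'` enter the final point `z` only through the sum `∑ i, s'_i • ι(h'_i)`.  If the
vectors `h'_i` span `H^m`, then their images span `F^m` over `F`, so this sum, and with it `z`, is
exactly uniform in `s'` once everything else is fixed.  If they do not span, some nonzero linear
functional on `H^m` vanishes on all `m + 1` of them.  There are fewer than `|H|^m` such functionals,
and each of them does so with probability `|H|^{-(m+1)}`, so this costs at most `1/|H|`.
-/

open Finset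
open scoped BigOperators

section Density

variable {α β : Type*} [Fintype α] [Fintype β]

lemma dens_filter_prod_eq_expect (p : α × β → Prop) [DecidablePred p] :
    dens {x | p x} = 𝔼 a, dens {b | p (a, b)} := by
  simp_rw [Fintype.expect_eq_sum_div_card, dens, ← sum_div, div_div, natCast_card_filter,
    Fintype.sum_prod_type, Fintype.card_prod, Nat.cast_mul, mul_comm]

lemma dens_filter_prod_swap (p : α × β → Prop) [DecidablePred p] :
    dens {x : β × α | p x.swap} = dens {x | p x} := by
  rw [← dens_map_equiv (Equiv.prodComm β α)]
  congr 1
  ext x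
  simp

lemma dens_filter_prod_le_add_dens (p : α × β → Prop) (bad : α → Prop) [DecidablePred p]
    [DecidablePred bad] {δ : ℚ≥0} (h : ∀ a, ¬ bad a → dens {b | p (a, b)} ≤ δ) :
    dens {x | p x} ≤ δ + dens {a | bad a} := by
  have pointwise (a : α) : dens {b | p (a, b)} ≤ δ + if bad a then 1 else 0 := by
    split_ifs with ha
    · exact dens_le_one.trans le_add_self
    · simpa using h a ha
  calc dens {x | p x}
      ≤ 𝔼 a, (δ + if bad a then 1 else 0) := by
        rw [dens_filter_prod_eq_expect]
        exact expect_le_expect fun a _ => pointwise a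
    _ = 𝔼 _a : α, δ + dens {a | bad a} := by
        rw [expect_add_distrib, Fintype.expect_eq_sum_div_card fun a => ite (bad a) _ _, dens,
          natCast_card_filter]
    _ ≤ δ + dens {a | bad a} := by
        gcongr
        cases isEmpty_or_nonempty α <;> simp

lemma dens_filter_prod_le_of_forall_fst (p : α × β → Prop) [DecidablePred p] {δ : ℚ≥0}
    (h : ∀ a, dens {b | p (a, b)} ≤ δ) : dens {x | p x} ≤ δ := by
  simpa using dens_filter_prod_le_add_dens p (fun _ => False) fun a _ => h a

lemma dens_filter_prod_le_of_forall_snd (p : α × β → Prop) [DecidablePred p] {δ : ℚ≥0}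
    (h : ∀ b, dens {a | p (a, b)} ≤ δ) : dens {x | p x} ≤ δ := by
  rw [← dens_filter_prod_swap]
  exact dens_filter_prod_le_of_forall_fst _ h

end Density

section Equidistribution

variable {A B : Type*} [AddGroup A] [AddGroup B] [Fintype A] [Fintype B]

lemma card_filter_add_map_mul_card [DecidableEq B] (g : A →+ B) (hg : Function.Surjective g)
    (c b : B) : #{a | c + g a = b} * Fintype.card B = Fintype.card A := by
  have card_fiber (b' : B) : #{a | g a = b'} = #{a | c + g a = b} := by
    simp_rw [← eq_neg_add_iff_add_eq]
    exact AddMonoidHom.card_fiber_eq_of_mem_range g (hg _) (hg _)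
  calc #{a | c + g a = b} * Fintype.card B
      = ∑ b' : B, #{a | g a = b'} := by simp [card_fiber, mul_comm]
    _ = Fintype.card A := (card_eq_sum_card_fiberwise fun _ _ => mem_coe.2 (mem_univ _)).symm

lemma dens_filter_add_map (g : A →+ B) (hg : Function.Surjective g) (c : B) (p : B → Prop)
    [DecidablePred p] : dens {a | p (c + g a)} = dens {b | p b} := by
  have card_eq : #{a | p (c + g a)} * Fintype.card B = #{b | p b} * Fintype.card A := by
    rw [card_eq_sum_card_fiberwise (f := fun a => c + g a) (t := {b | p b})
      fun a ha => by simpa using ha, sum_mul, sum_const_nat]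
    intro b hb
    have fiber_eq : ({a ∈ {a | p (c + g a)} | c + g a = b} : Finset A)
        = ({a | c + g a = b} : Finset A) := by
      rw [filter_filter]
      exact filter_congr fun a _ => ⟨And.right, fun h => ⟨h ▸ (mem_filter.1 hb).2, h⟩⟩
    rw [fiber_eq, card_filter_add_map_mul_card g hg c b]
  rw [dens, dens, div_eq_div_iff]
  · exact_mod_cast card_eq
  all_goals exact_mod_cast Fintype.card_ne_zero

end Equidistribution

section SpanningTuples

lemma span_range_linearMap_comp_eq_top {K L V W ι : Type*} [CommSemiring K] [Semiring L]
    [Algebra K L] [AddCommMonoid V] [Module K V] [AddCommMonoid W] [Module K W] [Module L W]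
    [IsScalarTower K L W] (f : V →ₗ[K] W) (hf : Submodule.span L (Set.range f) = ⊤)
    {v : ι → V} (hv : Submodule.span K (Set.range v) = ⊤) :
    Submodule.span L (Set.range (f ∘ v)) = ⊤ := by
  have span_eq_range : (Submodule.span K (Set.range (f ∘ v)) : Set W) = Set.range f := by
    rw [Set.range_comp, Submodule.span_image, hv, Submodule.map_top, LinearMap.coe_range]
  rw [← Submodule.span_span_of_tower K L, span_eq_range, hf]

variable {K V ι : Type*} [Field K] [Fintype K] [AddCommGroup V] [Module K V] [Fintype V]
  [Fintype ι] [DecidableEq ι]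

lemma dens_filter_forall_dual_eq_zero {φ : Module.Dual K V} (hφ : φ ≠ 0) :
    dens {v : ι → V | ∀ i, φ (v i) = 0} = ((Fintype.card K : ℚ≥0) ^ Fintype.card ι)⁻¹ := by
  have surj : Function.Surjective (φ.compLeft ι) := (LinearMap.surjective hφ).comp_left
  calc dens {v : ι → V | ∀ i, φ (v i) = 0}
      = dens {v : ι → V | 0 + φ.compLeft ι v = 0} := by simp [funext_iff]
    _ = dens {c : ι → K | c = 0} :=
        dens_filter_add_map (φ.compLeft ι).toAddMonoidHom surj 0 (· = 0)
    _ = ((Fintype.card K : ℚ≥0) ^ Fintype.card ι)⁻¹ := by simp [filter_eq']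

lemma dens_filter_span_ne_top_le :
    dens {v : ι → V | Submodule.span K (Set.range v) ≠ ⊤}
      ≤ (Fintype.card V : ℚ≥0) / (Fintype.card K : ℚ≥0) ^ Fintype.card ι := by
  have : Finite (Module.Dual K V) := Module.finite_of_finite K
  have : Fintype (Module.Dual K V) := .ofFinite _
  have card_dual : Fintype.card (Module.Dual K V) = Fintype.card V := by
    rw [Module.card_eq_pow_finrank (K := K), Subspace.dual_finrank_eq,
      ← Module.card_eq_pow_finrank]
  have subset_biUnion : ({v | Submodule.span K (Set.range v) ≠ ⊤} : Finset (ι → V)) ⊆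
      ({φ | φ ≠ 0} : Finset (Module.Dual K V)).biUnion fun φ => {v | ∀ i, φ (v i) = 0} := by
    intro v hv
    obtain ⟨φ, hφ, hle⟩ :=
      Submodule.exists_le_ker_of_lt_top _ (lt_top_iff_ne_top.2 (by simpa using hv))
    simp only [mem_biUnion, mem_filter, mem_univ, true_and]
    exact ⟨φ, hφ, fun i => hle (Submodule.subset_span ⟨i, rfl⟩)⟩
  calc dens {v : ι → V | Submodule.span K (Set.range v) ≠ ⊤}
      ≤ ∑ φ : Module.Dual K V with φ ≠ 0, dens {v : ι → V | ∀ i, φ (v i) = 0} :=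
        (dens_le_dens subset_biUnion).trans dens_biUnion_le
    _ = #{φ : Module.Dual K V | φ ≠ 0} * ((Fintype.card K : ℚ≥0) ^ Fintype.card ι)⁻¹ := by
        rw [← nsmul_eq_mul]
        exact sum_eq_card_nsmul fun φ hφ => dens_filter_forall_dual_eq_zero (mem_filter.1 hφ).2
    _ ≤ Fintype.card V / (Fintype.card K : ℚ≥0) ^ Fintype.card ι := by
        rw [div_eq_mul_inv, ← card_dual]
        gcongr
        exact card_le_univ _

end SpanningTuples

section Walk

variable {H F : Type*} [Field F] {m n : ℕ}

lemma pad_val {β : Type*} [Zero β] (f : Fin n → β) (i : Fin n) : pad f i = f i := by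
  simp [pad]

lemma span_range_iotaV_comp_eq_top [CommSemiring H] [Algebra H F] {ι : Type*} {h : ι → Fin m → H}
    (hh : Submodule.span H (Set.range h) = ⊤) :
    Submodule.span F (Set.range fun i => (iotaV (h i) : Fin m → F)) = ⊤ := by
  refine span_range_linearMap_comp_eq_top ((Algebra.linearMap H F).compLeft (Fin m)) ?_ hh
  rw [← top_le_iff, ← (Pi.basisFun F (Fin m)).span_eq]
  refine Submodule.span_mono ?_
  rintro _ ⟨j, rfl⟩
  refine ⟨Pi.single j 1, ?_⟩
  ext k
  simp [Pi.single_apply, apply_ite]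

lemma walkX_eq_add_sum [CommSemiring H] [Algebra H F] (x0 : Fin m → F) (h0 : Fin m → H)
    (h' : ℕ → Fin m → H) (s s' t t' : ℕ → F) (k : ℕ) :
    walkX x0 h0 h' s s' t t' k
      = walkX x0 h0 h' s 0 t t' k + ∑ i ∈ range k, s' i • (iotaV (h' i) : Fin m → F) := by
  induction k with
  | zero => simp [walkX]
  | succ k ih =>
    rw [sum_range_succ, walkX, walkX, ih, Pi.zero_apply, zero_smul]
    abel

lemma walkX_pad_eq_add_linearCombination [CommSemiring H] [Algebra H F] (x0 : Fin m → F)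
    (h0 : Fin m → H) (h : Fin n → Fin m → H) (s t t' : ℕ → F) (s' : Fin n → F) :
    walkX x0 h0 (pad h) s (pad s') t t' n
      = walkX x0 h0 (pad h) s 0 t t' n
        + Fintype.linearCombination F (fun i => iotaV (h i)) s' := by
  simp_rw [walkX_eq_add_sum _ _ _ s (pad s'), sum_range, pad_val, Fintype.linearCombination_apply]

variable [Fintype F]

lemma dens_filter_walkX_of_span_eq_top [CommSemiring H] [Algebra H F] (p : (Fin m → F) → Prop)
    [DecidablePred p] (x0 : Fin m → F) (h0 : Fin m → H) {h : Fin n → Fin m → H}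
    (hh : Submodule.span H (Set.range h) = ⊤) (s t t' : ℕ → F) :
    dens {s' : Fin n → F | p (walkX x0 h0 (pad h) s (pad s') t t' n)} = dens {y | p y} := by
  have surj : Function.Surjective
      (Fintype.linearCombination F fun i => (iotaV (h i) : Fin m → F)) := by
    rw [← LinearMap.range_eq_top, Fintype.range_linearCombination,
      span_range_iotaV_comp_eq_top hh]
  simp_rw [walkX_pad_eq_add_linearCombination]
  exact dens_filter_add_map
    (Fintype.linearCombination F fun i => (iotaV (h i) : Fin m → F)).toAddMonoidHom surj _ p

lemma dens_filter_walkX_le [Field H] [Fintype H] [Algebra H F] (p : (Fin m → F) → Prop)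
    [DecidablePred p] (x0 : Fin m → F) (h0 : Fin m → H) (k : ℕ) :
    dens {ω : (Fin n → Fin m → H) × (Fin n → F) × (Fin n → F) × (Fin k → F) × (Fin k → F) |
        p (walkX x0 h0 (pad ω.1) (pad ω.2.1) (pad ω.2.2.1) (pad ω.2.2.2.1) (pad ω.2.2.2.2) n)}
      ≤ dens {y | p y} + (Fintype.card H : ℚ≥0) ^ m / (Fintype.card H : ℚ≥0) ^ n := by
  calc _ ≤ dens {y | p y}
          + dens {h : Fin n → Fin m → H | Submodule.span H (Set.range h) ≠ ⊤} := by
        refine dens_filter_prod_le_add_dens _ _ fun h hh => ?_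
        refine dens_filter_prod_le_of_forall_fst _ fun s => ?_
        refine dens_filter_prod_le_of_forall_snd _ fun t => ?_
        exact (dens_filter_walkX_of_span_eq_top p x0 h0 (not_not.1 hh) (pad s) (pad t.1)
          (pad t.2)).le
    _ ≤ _ := by
        gcongr
        simpa using dens_filter_span_ne_top_le (K := H) (V := Fin m → H) (ι := Fin n)

end Walk

theorem final_point_almost_uniform_general {H F : Type*} [Field H] [Fintype H] [Field F]
    [Fintype F] [Algebra H F] {m : ℕ} (n : ℕ) (p : (Fin m → F) → Prop) [DecidablePred p] {τ : ℝ}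
    (hp : (#{y | p y} : ℝ) ≤ τ * (Fintype.card F : ℝ) ^ m) (x0 : Fin m → F) (h0 : Fin m → H) :
    (#{ω : (Fin (n + 1) → Fin m → H) ×
          (Fin (n + 1) → F) × (Fin (n + 1) → F) × (Fin n → F) × (Fin n → F) |
        p (walkX x0 h0 (pad ω.1) (pad ω.2.1) (pad ω.2.2.1) (pad ω.2.2.2.1) (pad ω.2.2.2.2)
          (n + 1))} : ℝ)
      / ((Fintype.card H : ℝ) ^ (m * (n + 1)) * (Fintype.card F : ℝ) ^ (4 * n + 2))
    ≤ τ + (Fintype.card H : ℝ) ^ m / (Fintype.card H : ℝ) ^ (n + 1) := by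
  have dens_le : ((dens {y | p y} : ℚ≥0) : ℝ) ≤ τ := by
    rw [nnratCast_dens, div_le_iff₀ (by exact_mod_cast Fintype.card_pos)]
    simpa using hp
  have walk_le := (NNRat.cast_le (K := ℝ)).2 (dens_filter_walkX_le (n := n + 1) p x0 h0 n)
  refine le_trans (le_of_eq ?_) (walk_le.trans ?_)
  · rw [nnratCast_dens]
    congr 1
    simp only [Fintype.card_prod, Fintype.card_fun, Fintype.card_fin]
    push_cast
    ring
  · push_cast [-nnratCast_dens]
    gcongr

/-- **Lemma 4.4 (`random z` in the final plane).**
Let `H` be a finite field, `F` an extension of degree `m ≥ 1`, and `f : F^m → F`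
nonzero on at most `τ·|F|^m` points.  Fix `x₀ ∈ F^m` and `h₀ ∈ H^m`.  Sampling
`h'₀, …, h'_m ∈ H^m`, `s₀, …, s_m, s'₀, …, s'_m ∈ F` and `t₀, …, t_{m−1}, t'₀, …, t'_{m−1} ∈ F`
uniformly and independently and running the plane-line walk, the final point
`z = x_m + s_m • ĥ_m + s'_m • ι(h'_m)` (which is `walkX … (m+1)`) satisfies `f(z) ≠ 0`
with probability at most `τ + 2/|H|` over the sample space `(H^m)^{m+1} × F^{4m+2}`. -/
theorem final_point_almost_uniform (H F : Type*) [Field H] [Fintype H] [Field F] [Fintype F]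
    [Algebra H F] (m : ℕ) (hm : 1 ≤ m) (hrank : Module.finrank H F = m)
    (f : (Fin m → F) → F) (τ : ℝ)
    (hf : ((Finset.univ.filter (fun y : Fin m → F => f y ≠ 0)).card : ℝ)
            ≤ τ * (Fintype.card F : ℝ) ^ m)
    (x0 : Fin m → F) (h0 : Fin m → H) :
    ((Finset.univ.filter
        (fun ω : (Fin (m + 1) → (Fin m → H))
                  × (Fin (m + 1) → F) × (Fin (m + 1) → F) × (Fin m → F) × (Fin m → F) =>
          f (walkX x0 h0 (pad ω.1) (pad ω.2.1) (pad ω.2.2.1) (pad ω.2.2.2.1)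
              (pad ω.2.2.2.2) (m + 1)) ≠ 0)).card : ℝ)
      / ((Fintype.card H : ℝ) ^ (m * (m + 1)) * (Fintype.card F : ℝ) ^ (4 * m + 2))
    ≤ τ + 2 / (Fintype.card H : ℝ) := by
  refine (final_point_almost_uniform_general m (f · ≠ 0) hf x0 h0).trans ?_
  rw [pow_succ, div_mul_cancel_left₀ (by simp), ← one_div]
  gcongr
  norm_num
end
end

section
/- Let F be a finite field with n = |F|, and let δ, γ be reals with δ ≥ 3/4 and 0 < γ ≤ δ/8. Let g : F × F → F be a function with at least (δ − 2γ)·n² nonzero values. Then the number of pairs (x, y) ∈ (F²)² such that |{t ∈ F : g(x + t·y) ≠ 0}| < 2γ·n is at most (4/n)·n⁴. (Equivalently: a uniformly random line in F², with uniform base point and direction, has fewer than 2γn points at which g is nonzero with probability at most 4/n.) -/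
open scoped Classical

/-!
For a random line `t ↦ x + t • y`, the points at two distinct parameters are independent and
uniform on the space `V`. Hence the number of parameters at which the line meets a set `S` of
density `α` has mean `α|K|` and variance `α(1 - α)|K|`, and Chebyshev's inequality bounds the
probability that it falls below `τ|K|`, for `τ < α`, by `α(1 - α) / (|K|(α - τ)²)`. With
`α ≥ δ - 2γ ≥ 3δ/4` and `τ = 2γ ≤ α/3` this is at most `9 / (4α|K|) ≤ 3 / (δ|K|)`.
-/

section LineSums

variable {K V R : Type*} [DivisionRing K] [AddCommGroup V] [Module K V]

lemma line_point_pair_injective {t u : K} (htu : t ≠ u) :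
    Function.Injective fun xy : V × V => (xy.1 + t • xy.2, xy.1 + u • xy.2) := by
  rintro ⟨x, y⟩ ⟨x', y'⟩ h
  obtain ⟨ht, hu⟩ : x + t • y = x' + t • y' ∧ x + u • y = x' + u • y' := Prod.mk.inj h
  have hsmul : (t - u) • y = (t - u) • y' := by
    simpa only [add_sub_add_left_eq_sub, ← sub_smul] using
      (by rw [ht, hu] : (x + t • y) - (x + u • y) = (x' + t • y') - (x' + u • y'))
  obtain rfl : y = y' := smul_right_injective V (sub_ne_zero.mpr htu) hsmul
  rw [add_right_cancel ht]

variable [Fintype V]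

lemma sum_line_point [AddCommMonoid R] (f : V → R) (t : K) :
    ∑ xy : V × V, f (xy.1 + t • xy.2) = Fintype.card V • ∑ v, f v := by
  have sum_translate (y : V) : ∑ x, f (x + t • y) = ∑ v, f v :=
    Equiv.sum_comp (Equiv.addRight (t • y)) f
  simp only [Fintype.sum_prod_type_right, sum_translate, Finset.sum_const, Finset.card_univ]

lemma sum_line_point_mul_line_point [NonUnitalNonAssocSemiring R] (f g : V → R) {t u : K}
    (htu : t ≠ u) :
    ∑ xy : V × V, f (xy.1 + t • xy.2) * g (xy.1 + u • xy.2) = (∑ v, f v) * ∑ v, g v := by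
  have hbij := Finite.injective_iff_bijective.mp (line_point_pair_injective (V := V) htu)
  rw [hbij.sum_comp fun pq : V × V => f pq.1 * g pq.2, Fintype.sum_prod_type, Finset.sum_mul_sum]

lemma sum_sq_sum_line_of_sum_eq_zero [Fintype K] [CommSemiring R] (f : V → R)
    (hf : ∑ v, f v = 0) :
    ∑ xy : V × V, (∑ t : K, f (xy.1 + t • xy.2)) ^ 2
      = Fintype.card K * Fintype.card V * ∑ v, f v ^ 2 := by
  have correlation (t u : K) : ∑ xy : V × V, f (xy.1 + t • xy.2) * f (xy.1 + u • xy.2)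
      = if t = u then Fintype.card V * ∑ v, f v ^ 2 else 0 := by
    split_ifs with htu
    · subst htu
      simpa only [← sq, nsmul_eq_mul] using sum_line_point (fun v => f v ^ 2) t
    · rw [sum_line_point_mul_line_point f f htu, hf, zero_mul]
  calc ∑ xy : V × V, (∑ t : K, f (xy.1 + t • xy.2)) ^ 2
      = ∑ t : K, ∑ u : K, ∑ xy : V × V, f (xy.1 + t • xy.2) * f (xy.1 + u • xy.2) := by
        simp only [sq, Finset.sum_mul_sum]
        rw [Finset.sum_comm]
        exact Finset.sum_congr rfl fun _ _ => Finset.sum_comm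
    _ = Fintype.card K * Fintype.card V * ∑ v, f v ^ 2 := by
        simp [correlation, mul_assoc]

end LineSums

lemma card_filter_mul_sq_le_sum_sq_sub {ι : Type*} [Fintype ι] (X : ι → ℝ) {a m : ℝ}
    (ham : a ≤ m) :
    (Finset.univ.filter fun i => X i < a).card * (m - a) ^ 2 ≤ ∑ i, (X i - m) ^ 2 := by
  rw [← nsmul_eq_mul]
  refine (Finset.card_nsmul_le_sum _ (fun i => (X i - m) ^ 2) _ fun i hi => ?_).trans
    (Finset.sum_le_univ_sum_of_nonneg fun i => sq_nonneg _)
  have hi : X i < a := (Finset.mem_filter.mp hi).2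
  nlinarith

section LineCounts

variable (K : Type*) {V : Type*} [DivisionRing K] [Fintype K] [AddCommGroup V] [Module K V]
  [Fintype V]

lemma sum_sq_card_line_inter_sub_mean (S : Finset V) {α : ℝ} (hα : α * Fintype.card V = S.card) :
    ∑ xy : V × V,
        (((Finset.univ.filter fun t : K => xy.1 + t • xy.2 ∈ S).card : ℝ)
          - α * Fintype.card K) ^ 2
      = α * (1 - α) * Fintype.card K * (Fintype.card V : ℝ) ^ 2 := by
  let f : V → ℝ := fun v => (if v ∈ S then 1 else 0) - α
  have sum_f : ∑ v, f v = 0 := by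
    simp [f, ← hα, mul_comm]
  have sum_f_sq : ∑ v, f v ^ 2 = α * (1 - α) * Fintype.card V := by
    have f_sq (v : V) : f v ^ 2 = (1 - 2 * α) * (if v ∈ S then 1 else 0) + α ^ 2 := by
      simp only [f]
      split_ifs <;> ring
    simp only [f_sq, Finset.sum_add_distrib, ← Finset.mul_sum, Finset.sum_boole,
      Finset.filter_univ_mem, ← hα, Finset.sum_const, Finset.card_univ, nsmul_eq_mul]
    ring
  have sum_line (xy : V × V) : ∑ t : K, f (xy.1 + t • xy.2)
      = (Finset.univ.filter fun t : K => xy.1 + t • xy.2 ∈ S).card - α * Fintype.card K := by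
    simp [f, mul_comm]
  simp only [← sum_line, sum_sq_sum_line_of_sum_eq_zero f sum_f, sum_f_sq]
  ring

lemma card_lines_few_points_le (S : Finset V) {α τ : ℝ} (hα : α * Fintype.card V = S.card)
    (hτ : τ < α) :
    ((Finset.univ.filter fun xy : V × V =>
        ((Finset.univ.filter fun t : K => xy.1 + t • xy.2 ∈ S).card : ℝ)
          < τ * Fintype.card K).card : ℝ)
      ≤ α * (1 - α) / (Fintype.card K * (α - τ) ^ 2) * (Fintype.card V : ℝ) ^ 2 := by
  have hK : (0 : ℝ) < Fintype.card K := mod_cast Fintype.card_pos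
  have hgap : 0 < α - τ := sub_pos.mpr hτ
  have chebyshev := card_filter_mul_sq_le_sum_sq_sub
    (fun xy : V × V => ((Finset.univ.filter fun t : K => xy.1 + t • xy.2 ∈ S).card : ℝ))
    (mul_le_mul_of_nonneg_right hτ.le hK.le)
  rw [sum_sq_card_line_inter_sub_mean K S hα, ← sub_mul] at chebyshev
  refine ((le_div_iff₀ (by positivity)).mpr chebyshev).trans_eq ?_
  field_simp

theorem line_few_nonzeros_rare_general (S : Finset V) {δ γ : ℝ} (hδ : 0 < δ) (hγ : γ ≤ δ / 8)
    (hS : (δ - 2 * γ) * Fintype.card V ≤ S.card) :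
    ((Finset.univ.filter fun xy : V × V =>
        ((Finset.univ.filter fun t : K => xy.1 + t • xy.2 ∈ S).card : ℝ)
          < 2 * γ * Fintype.card K).card : ℝ)
      ≤ 3 / δ / Fintype.card K * (Fintype.card V : ℝ) ^ 2 := by
  have hV : (0 : ℝ) < Fintype.card V := mod_cast Fintype.card_pos
  obtain ⟨α, hα⟩ : ∃ α : ℝ, α * Fintype.card V = S.card := ⟨_, div_mul_cancel₀ _ hV.ne'⟩
  have density_ge : δ - 2 * γ ≤ α := le_of_mul_le_mul_right (hS.trans_eq hα.symm) hV
  have α_ge : 3 / 4 * δ ≤ α := by linarith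
  have α_pos : 0 < α := by linarith
  have gap_ge : 2 / 3 * α ≤ α - 2 * γ := by linarith
  refine (card_lines_few_points_le K S hα (by linarith)).trans
    (mul_le_mul_of_nonneg_right ?_ (sq_nonneg _))
  calc α * (1 - α) / (Fintype.card K * (α - 2 * γ) ^ 2)
      ≤ α * 1 / (Fintype.card K * (2 / 3 * α) ^ 2) := by gcongr; linarith
    _ = 9 / 4 / α / Fintype.card K := by field_simp; norm_num
    _ ≤ 9 / 4 / (3 / 4 * δ) / Fintype.card K := by gcongr
    _ = 3 / δ / Fintype.card K := by field_simp; norm_num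

end LineCounts

/-- **Claim 4.7 (sampling a random line from a plane with many nonzeros).**
Let `F` be a finite field with `n = |F|`, let `δ ≥ 3/4` and `0 < γ ≤ δ/8`, and let
`g : F × F → F` have at least `(δ − 2γ)·n²` nonzero values.  Then the number of pairs
`(x, y) ∈ (F²)²` such that `g` is nonzero at fewer than `2γn` points of the
parametrized line `t ↦ x + t • y` is at most `(4/n) · n⁴`. -/
theorem line_few_nonzeros_rare (F : Type*) [Field F] [Fintype F]
    (n : ℕ) (hn : n = Fintype.card F)
    (δ γ : ℝ) (hδ : 3 / 4 ≤ δ) (hγ0 : 0 < γ) (hγ : γ ≤ δ / 8)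
    (g : F × F → F)
    (hg : (δ - 2 * γ) * (n : ℝ) ^ 2
            ≤ ((Finset.univ.filter (fun p : F × F => g p ≠ 0)).card : ℝ)) :
    ((Finset.univ.filter (fun xy : (F × F) × (F × F) =>
        ((Finset.univ.filter (fun t : F => g (xy.1 + t • xy.2) ≠ 0)).card : ℝ)
          < 2 * γ * (n : ℝ))).card : ℝ)
      ≤ (4 / (n : ℝ)) * (n : ℝ) ^ 4 := by
  subst hn
  have hδ_pos : 0 < δ := by linarith
  calc _ ≤ 3 / δ / (Fintype.card F : ℝ) * (Fintype.card F : ℝ) ^ 4 := by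
        simpa [← sq, ← pow_mul] using line_few_nonzeros_rare_general F
          (Finset.univ.filter fun p => g p ≠ 0) hδ_pos hγ (by simpa [sq] using hg)
    _ ≤ 4 / (Fintype.card F : ℝ) * (Fintype.card F : ℝ) ^ 4 := by
        gcongr
        rw [div_le_iff₀ hδ_pos]
        linarith
end
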